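/- Let A, Y, W be random variables on a finite probability space with values in finite sets, with A taking values in a finite set 𝒜 with |𝒜| ≥ 2, and let g be a function from the value set of Y into 𝒜. If the information demand exceeds the output capacity, i.e. H(A | W) > H(Y | W), then perfect accuracy is impossible: P(g(Y) ≠ A) > 0. -/

import Mathlib

open scoped Classical
open Finset

namespace InfoQA

variable {Ω : Type*} [Fintype Ω]

/-- Probability of an event under a pmf `p` on a finite sample space. -/
noncomputable def pr (p : Ω → ℝ) (S : Ω → Prop) : ℝ :=
  ∑ ω, if S ω then p ω else 0

/-- Distribution of a random variable `X` under `p`. -/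
noncomputable def distOf (p : Ω → ℝ) {α : Type*} (X : Ω → α) (a : α) : ℝ :=
  pr p (fun ω => X ω = a)

/-- Shannon entropy of a random variable (logarithm base 2). -/
noncomputable def H (p : Ω → ℝ) {α : Type*} [Fintype α] (X : Ω → α) : ℝ :=
  -∑ a, distOf p X a * Real.logb 2 (distOf p X a)

/-- Conditional entropy `H(X | Z) = H(X, Z) - H(Z)` (base 2). -/
noncomputable def condH (p : Ω → ℝ) {α β : Type*} [Fintype α] [Fintype β]
    (X : Ω → α) (Z : Ω → β) : ℝ :=
  H p (fun ω => (X ω, Z ω)) - H p Z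

/-- Conditional mutual information `I(X ; Y | Z) = H(X | Z) - H(X | (Y, Z))` (base 2). -/
noncomputable def condMI (p : Ω → ℝ) {α β γ : Type*} [Fintype α] [Fintype β] [Fintype γ]
    (X : Ω → α) (Y : Ω → β) (Z : Ω → γ) : ℝ :=
  condH p X Z - condH p X (fun ω => (Y ω, Z ω))

/-- Binary entropy function (base 2); `Real.logb 2 0 = 0`, so `binEnt 0 = binEnt 1 = 0`. -/
noncomputable def binEnt (x : ℝ) : ℝ :=
  -(x * Real.logb 2 x) - (1 - x) * Real.logb 2 (1 - x)

end InfoQA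

open InfoQA

/-!
Entropy is the expected surprisal `-log₂ P(X = X ω)`. If `Z` is almost surely a function of `X`,
then up to a null set the event `X = X ω` is contained in `Z = Z ω`, so the surprisal of `Z` is
pointwise at most that of `X`, and `H(Z) ≤ H(X)`. An errorless decoder makes `(A, W)` almost surely
a function of `(Y, W)`, and subtracting `H(W)` gives `H(A | W) ≤ H(Y | W)`.
-/

namespace InfoQA

variable {Ω α β γ : Type*} [Fintype Ω] {p : Ω → ℝ}

lemma pr_pos_iff (hp : ∀ ω, 0 ≤ p ω) {S : Ω → Prop} : 0 < pr p S ↔ ∃ ω, p ω ≠ 0 ∧ S ω := by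
  have hterm : ∀ ω ∈ univ, 0 ≤ if S ω then p ω else 0 := fun ω _ => ite_nonneg (hp ω) le_rfl
  simp only [pr, sum_pos_iff_of_nonneg hterm, mem_univ, true_and]
  refine exists_congr fun ω => ?_
  by_cases hS : S ω <;> simp [hS, (hp ω).lt_iff_ne']

lemma pr_mono_ae (hp : ∀ ω, 0 ≤ p ω) {S T : Ω → Prop} (hST : ∀ ω, p ω ≠ 0 → S ω → T ω) :
    pr p S ≤ pr p T := by
  refine sum_le_sum fun ω _ => ?_
  by_cases hS : S ω
  · obtain hω | hω := eq_or_ne (p ω) 0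
    · simp [hω]
    · simp [hS, hST ω hω hS]
  · simpa only [hS, if_false] using ite_nonneg (hp ω) le_rfl

lemma sum_distOf_mul [Fintype α] (p : Ω → ℝ) (X : Ω → α) (F : α → ℝ) :
    ∑ a, distOf p X a * F a = ∑ ω, p ω * F (X ω) := by
  simp only [distOf, pr, sum_mul, ite_mul, zero_mul]
  rw [sum_comm]
  simp only [sum_ite_eq, mem_univ, if_true]

lemma H_eq_neg_sum_mul_logb [Fintype α] (p : Ω → ℝ) (X : Ω → α) :
    H p X = -∑ ω, p ω * Real.logb 2 (distOf p X (X ω)) :=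
  congrArg Neg.neg (sum_distOf_mul p X fun a => Real.logb 2 (distOf p X a))

lemma distOf_le_distOf_of_ae_eq_comp (hp : ∀ ω, 0 ≤ p ω) {X : Ω → α} {Z : Ω → β} {f : α → β}
    (hf : ∀ ω, p ω ≠ 0 → Z ω = f (X ω)) (a : α) : distOf p X a ≤ distOf p Z (f a) :=
  pr_mono_ae hp fun ω hω hX => (hf ω hω).trans (congrArg f hX)

lemma H_le_of_ae_eq_comp [Fintype α] [Fintype β] (hp : ∀ ω, 0 ≤ p ω) {X : Ω → α} {Z : Ω → β}
    {f : α → β} (hf : ∀ ω, p ω ≠ 0 → Z ω = f (X ω)) : H p Z ≤ H p X := by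
  rw [H_eq_neg_sum_mul_logb, H_eq_neg_sum_mul_logb]
  refine neg_le_neg (sum_le_sum fun ω _ => ?_)
  obtain hω | hω := eq_or_ne (p ω) 0
  · simp [hω]
  have hpos : 0 < distOf p X (X ω) := (pr_pos_iff hp).2 ⟨ω, hω, rfl⟩
  have hle : distOf p X (X ω) ≤ distOf p Z (Z ω) :=
    (hf ω hω).symm ▸ distOf_le_distOf_of_ae_eq_comp hp hf (X ω)
  exact mul_le_mul_of_nonneg_left (Real.logb_le_logb_of_le one_lt_two hpos hle) (hp ω)

lemma condH_le_of_ae_eq_comp [Fintype α] [Fintype β] [Fintype γ] (hp : ∀ ω, 0 ≤ p ω)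
    {X : Ω → α} {Z : Ω → β} {W : Ω → γ} {f : α → γ → β}
    (hf : ∀ ω, p ω ≠ 0 → Z ω = f (X ω) (W ω)) : condH p Z W ≤ condH p X W :=
  sub_le_sub_right
    (H_le_of_ae_eq_comp hp (f := fun q => (f q.1 q.2, q.2)) fun ω hω => by rw [hf ω hω]) _

end InfoQA

theorem demand_gt_capacity_implies_error_general
    {Ω 𝒜 𝒴 𝒲 : Type*} [Fintype Ω] [Fintype 𝒜] [Fintype 𝒴] [Fintype 𝒲]
    {p : Ω → ℝ} (hp : ∀ ω, 0 ≤ p ω) {A : Ω → 𝒜} {Y : Ω → 𝒴} {W : Ω → 𝒲} (g : 𝒴 → 𝒲 → 𝒜)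
    (hgt : condH p A W > condH p Y W) :
    0 < pr p (fun ω => g (Y ω) (W ω) ≠ A ω) := by
  rw [pr_pos_iff hp]
  by_contra! hcorrect
  exact hgt.not_ge (condH_le_of_ae_eq_comp hp fun ω hω => (hcorrect ω hω).symm)

/-- If the information demand exceeds the output capacity, perfect accuracy is
impossible: `H(A | W) > H(Y | W)` implies `P(g(Y) ≠ A) > 0`. -/
theorem demand_gt_capacity_implies_error
    {Ω 𝒜 𝒴 𝒲 : Type*} [Fintype Ω] [Fintype 𝒜] [Fintype 𝒴] [Fintype 𝒲]
    (p : Ω → ℝ) (hp : ∀ ω, 0 ≤ p ω) (hsum : ∑ ω, p ω = 1)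
    (hcard : 2 ≤ Fintype.card 𝒜)
    (A : Ω → 𝒜) (Y : Ω → 𝒴) (W : Ω → 𝒲) (g : 𝒴 → 𝒜)
    (hgt : condH p A W > condH p Y W) :
    0 < pr p (fun ω => g (Y ω) ≠ A ω) :=
  demand_gt_capacity_implies_error_general hp (fun y _ => g y) hgt
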